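/- arXiv:1312.0101 — 2 statements merged into one kernel-verified Lean document; each statement's English description precedes it below -/
import Mathlib

section
/- Let Ω and ω be as in the context, and suppose 0 < ε < 1/4. Then ∫_0^ε ω dx + ∫_{1−ε}^1 ω dx ≤ C ε ∫_ε^{1−ε} ω dx, with C depending only on n. -/
open MeasureTheory Set Filter Topology RealInnerProductSpace

noncomputable section

/-- The point `(x, y) ∈ ℝ × ℝ^m ≅ ℝ^{m+1}`. -/
def mkPt (m : ℕ) (x : ℝ) (y : EuclideanSpace ℝ (Fin m)) : EuclideanSpace ℝ (Fin (m+1)) :=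
  (EuclideanSpace.equiv (Fin (m+1)) ℝ).symm (Fin.cons x ((EuclideanSpace.equiv (Fin m) ℝ) y))

/-- The cross-section `Ω(s) = {y : (s, y) ∈ Ω}`. -/
def cross {m : ℕ} (Ω : Set (EuclideanSpace ℝ (Fin (m+1)))) (s : ℝ) :
    Set (EuclideanSpace ℝ (Fin m)) := {y | mkPt m s y ∈ Ω}

/-- `ω(s)`: the (n-1)-dimensional volume of the cross-section `Ω(s)`. -/
def ωvol {m : ℕ} (Ω : Set (EuclideanSpace ℝ (Fin (m+1)))) (s : ℝ) : ℝ :=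
  (volume (cross Ω s)).toReal

/-- The Laplacian, as the sum of the pure second derivatives along the standard basis. -/
def lap {k : ℕ} (u : EuclideanSpace ℝ (Fin k) → ℝ) (p : EuclideanSpace ℝ (Fin k)) : ℝ :=
  ∑ i, fderiv ℝ (fun q => fderiv ℝ u q (EuclideanSpace.single i 1)) p (EuclideanSpace.single i 1)

/-- The cross-sectional average `ū(x)` of `u`. -/
def ubarFn {m : ℕ} (Ω : Set (EuclideanSpace ℝ (Fin (m+1))))
    (u : EuclideanSpace ℝ (Fin (m+1)) → ℝ) (x : ℝ) : ℝ :=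
  (∫ y in cross Ω x, u (mkPt m x y)) / ωvol Ω x

/-!
Let `S_x` be the section of a convex set at height `x`. If `(t, z)` is a point of the set, then the
cone with vertex `(t, z)` and base `S_s` lies in it, so for `x` between `s` and `t` the section
`S_x` contains a copy of `S_s` scaled by `|x - t| / |s - t|`. Taking `t = 7/8` for `s ≤ 1/4` and
`t = 1/8` for `s ≥ 3/4`, the scale is at least `1/8` for all `x ∈ [1/4, 3/4]`, so every end section
has volume at most `8 ^ d` times that of every middle section, `d` being the dimension of the
sections. Averaging over the ends and over the middle gives the claim.
-/

section Integration

theorem integrable_measureReal_prodMk_left₀ {α β : Type*} [MeasurableSpace α] [MeasurableSpace β]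
    {μ : Measure α} {ν : Measure β} [SFinite ν] {s : Set (α × β)}
    (hs : NullMeasurableSet s (μ.prod ν)) (hfin : (μ.prod ν) s ≠ ⊤) :
    Integrable (fun x ↦ ν.real (Prod.mk x ⁻¹' s)) μ := by
  have hint := Measure.integrable_measure_prodMk_left (measurableSet_toMeasurable (μ.prod ν) s)
    ((measure_toMeasurable s).trans_ne hfin)
  refine hint.congr ?_
  filter_upwards [Measure.ae_ae_of_ae_prod hs.toMeasurable_ae_eq] with x hx
  exact measureReal_congr hx

theorem sub_mul_integral_le_sub_mul_integral {f g : ℝ → ℝ} {a b c d : ℝ} (hab : a ≤ b)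
    (hcd : c ≤ d) (hf : IntervalIntegrable f volume a b) (hg : IntervalIntegrable g volume c d)
    (hfg : ∀ s ∈ Icc a b, ∀ x ∈ Icc c d, f s ≤ g x) :
    (d - c) * ∫ s in a..b, f s ≤ (b - a) * ∫ x in c..d, g x := by
  have hpoint : ∀ s ∈ Icc a b, (d - c) * f s ≤ ∫ x in c..d, g x := fun s hs ↦ by
    simpa only [intervalIntegral.integral_const, smul_eq_mul] using
      intervalIntegral.integral_mono_on hcd intervalIntegrable_const hg (hfg s hs)
  simpa only [intervalIntegral.integral_const_mul, intervalIntegral.integral_const,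
    smul_eq_mul] using intervalIntegral.integral_mono_on hab (hf.const_mul (d - c))
      intervalIntegrable_const hpoint

theorem integral_ends_le_mul_integral_middle {f : ℝ → ℝ} {K ε : ℝ} (hf₀ : 0 ≤ f)
    (hf : LocallyIntegrable f) (hK : 0 ≤ K)
    (hends : ∀ s ∈ Icc (0 : ℝ) (1 / 4) ∪ Icc (3 / 4) 1, ∀ x ∈ Icc (1 / 4 : ℝ) (3 / 4),
      f s ≤ K * f x) (hε₀ : 0 ≤ ε) (hε : ε ≤ 1 / 4) :
    (∫ x in (0 : ℝ)..ε, f x) + (∫ x in (1 - ε)..1, f x) ≤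
      4 * K * ε * ∫ x in ε..(1 - ε), f x := by
  have hint (a b : ℝ) : IntervalIntegrable f volume a b :=
    (hf.integrableOn_isCompact isCompact_uIcc).intervalIntegrable
  have hleft := sub_mul_integral_le_sub_mul_integral hε₀ (by norm_num) (hint 0 ε)
    ((hint (1 / 4) (3 / 4)).const_mul K)
    fun s hs ↦ hends s (.inl ⟨hs.1, hs.2.trans hε⟩)
  have hright := sub_mul_integral_le_sub_mul_integral (by linarith) (by norm_num) (hint (1 - ε) 1)
    ((hint (1 / 4) (3 / 4)).const_mul K)
    fun s hs ↦ hends s (.inr ⟨by linarith [hs.1], hs.2⟩)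
  have hmiddle : ∫ x in (1 / 4 : ℝ)..(3 / 4), f x ≤ ∫ x in ε..(1 - ε), f x :=
    intervalIntegral.integral_mono_interval hε (by norm_num) (by linarith)
      (.of_forall hf₀) (hint _ _)
  rw [intervalIntegral.integral_const_mul] at hleft hright
  have hscaled := mul_le_mul_of_nonneg_left hmiddle (mul_nonneg hK hε₀)
  linarith

end Integration

section ConvexSections

variable {E F : Type*} [NormedAddCommGroup E] [NormedSpace ℝ E] [FiniteDimensional ℝ E]
  [MeasurableSpace E] [BorelSpace E] (μ : Measure E) [μ.IsAddHaarMeasure]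

theorem ofReal_pow_mul_measure_section_le [AddCommGroup F] [Module ℝ F] {S : Set (F × E)}
    (hS : Convex ℝ S) {s t : F} (ht : (Prod.mk t ⁻¹' S).Nonempty) {a b : ℝ} (ha : 0 ≤ a)
    (hb : 0 ≤ b) (hab : a + b = 1) :
    ENNReal.ofReal (a ^ Module.finrank ℝ E) * μ (Prod.mk s ⁻¹' S) ≤
      μ (Prod.mk (a • s + b • t) ⁻¹' S) := by
  obtain ⟨z, hz⟩ := ht
  have hcone : AffineMap.homothety z a '' (Prod.mk s ⁻¹' S) ⊆ Prod.mk (a • s + b • t) ⁻¹' S := by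
    rintro _ ⟨y, hy, rfl⟩
    have homothety_eq : AffineMap.homothety z a y = a • y + b • z := by
      rw [AffineMap.homothety_eq_lineMap, AffineMap.lineMap_apply_module, ← hab,
        add_sub_cancel_left, add_comm]
    rw [mem_preimage, homothety_eq]
    exact hS hy hz ha hb hab
  calc ENNReal.ofReal (a ^ Module.finrank ℝ E) * μ (Prod.mk s ⁻¹' S)
      = μ (AffineMap.homothety z a '' (Prod.mk s ⁻¹' S)) := by
        rw [Measure.addHaar_image_homothety, abs_of_nonneg (pow_nonneg ha _)]
    _ ≤ μ (Prod.mk (a • s + b • t) ⁻¹' S) := measure_mono hcone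

theorem dist_pow_mul_measureReal_section_le [NormedAddCommGroup F] [NormedSpace ℝ F]
    {S : Set (F × E)} (hS : Convex ℝ S) {s t x : F} (ht : (Prod.mk t ⁻¹' S).Nonempty)
    (hx : x ∈ segment ℝ s t) (hfin : μ (Prod.mk x ⁻¹' S) ≠ ⊤) :
    dist x t ^ Module.finrank ℝ E * μ.real (Prod.mk s ⁻¹' S) ≤
      dist s t ^ Module.finrank ℝ E * μ.real (Prod.mk x ⁻¹' S) := by
  obtain ⟨a, b, ha, hb, hab, rfl⟩ := hx
  have hdist : dist (a • s + b • t) t = dist s t * a := by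
    have hsub : a • s + b • t - t = a • (s - t) := by
      obtain rfl : b = 1 - a := by linarith
      module
    rw [dist_eq_norm, hsub, norm_smul, Real.norm_of_nonneg ha, dist_eq_norm, mul_comm]
  have hvol : a ^ Module.finrank ℝ E * μ.real (Prod.mk s ⁻¹' S) ≤
      μ.real (Prod.mk (a • s + b • t) ⁻¹' S) := by
    simpa only [Measure.real, ENNReal.toReal_mul, ENNReal.toReal_ofReal (pow_nonneg ha _)] using
      ENNReal.toReal_mono hfin (ofReal_pow_mul_measure_section_le μ hS ht ha hb hab)
  rw [hdist, mul_pow, mul_assoc]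
  gcongr

variable {S : Set (ℝ × E)}

theorem measureReal_end_section_le (hS : Convex ℝ S)
    (hb : Bornology.IsBounded S) (hne : ∀ t ∈ Ioo (0 : ℝ) 1, (Prod.mk t ⁻¹' S).Nonempty)
    {s x : ℝ} (hs : s ∈ Icc (0 : ℝ) (1 / 4) ∪ Icc (3 / 4) 1)
    (hx : x ∈ Icc (1 / 4 : ℝ) (3 / 4)) :
    μ.real (Prod.mk s ⁻¹' S) ≤ 8 ^ Module.finrank ℝ E * μ.real (Prod.mk x ⁻¹' S) := by
  have hfin : μ (Prod.mk x ⁻¹' S) ≠ ⊤ :=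
    (hb.image_snd.subset
      (preimage_subset_iff.2 fun _ ↦ mem_image_of_mem Prod.snd)).measure_lt_top.ne
  obtain ⟨t, ht, hst, hxst, hxt⟩ : ∃ t ∈ Ioo (0 : ℝ) 1,
      dist s t ≤ 1 ∧ x ∈ segment ℝ s t ∧ 1 / 8 ≤ dist x t := by
    simp only [segment_eq_uIcc, Real.dist_eq]
    rcases hs with hs | hs
    · refine ⟨7 / 8, by norm_num, abs_le.2 ⟨?_, ?_⟩, Icc_subset_uIcc ⟨?_, ?_⟩, le_abs.2 (.inr ?_)⟩
        <;> linarith [hs.1, hs.2, hx.1, hx.2]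
    · refine ⟨1 / 8, by norm_num, abs_le.2 ⟨?_, ?_⟩, Icc_subset_uIcc' ⟨?_, ?_⟩, le_abs.2 (.inl ?_)⟩
        <;> linarith [hs.1, hs.2, hx.1, hx.2]
  rw [← inv_mul_le_iff₀ (by positivity), ← inv_pow, ← one_div]
  calc (1 / 8) ^ Module.finrank ℝ E * μ.real (Prod.mk s ⁻¹' S)
      ≤ dist x t ^ Module.finrank ℝ E * μ.real (Prod.mk s ⁻¹' S) := by gcongr
    _ ≤ dist s t ^ Module.finrank ℝ E * μ.real (Prod.mk x ⁻¹' S) :=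
        dist_pow_mul_measureReal_section_le μ hS (hne t ht) hxst hfin
    _ ≤ μ.real (Prod.mk x ⁻¹' S) :=
        mul_le_of_le_one_left measureReal_nonneg (pow_le_one₀ dist_nonneg hst)

theorem omega_mass_at_ends_general (hS : Convex ℝ S) (hb : Bornology.IsBounded S)
    (hne : ∀ t ∈ Ioo (0 : ℝ) 1, (Prod.mk t ⁻¹' S).Nonempty) {ε : ℝ} (hε₀ : 0 ≤ ε)
    (hε : ε ≤ 1 / 4) :
    (∫ x in (0 : ℝ)..ε, μ.real (Prod.mk x ⁻¹' S)) + (∫ x in (1 - ε)..1, μ.real (Prod.mk x ⁻¹' S)) ≤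
      4 * 8 ^ Module.finrank ℝ E * ε * ∫ x in ε..(1 - ε), μ.real (Prod.mk x ⁻¹' S) :=
  have hint : Integrable fun x ↦ μ.real (Prod.mk x ⁻¹' S) :=
    integrable_measureReal_prodMk_left₀ (hS.nullMeasurableSet _) hb.measure_lt_top.ne
  integral_ends_le_mul_integral_middle (fun _ ↦ measureReal_nonneg) hint.locallyIntegrable
    (by positivity) (fun _ hs _ hx ↦ measureReal_end_section_le μ hS hb hne hs hx) hε₀ hε

end ConvexSections

theorem isLinearMap_mkPt (m : ℕ) :
    IsLinearMap ℝ fun p : ℝ × EuclideanSpace ℝ (Fin m) ↦ mkPt m p.1 p.2 := by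
  constructor <;> intros <;> ext i <;> cases i using Fin.cases <;> simp [mkPt]

theorem mkPt_injective (m : ℕ) :
    Function.Injective fun p : ℝ × EuclideanSpace ℝ (Fin m) ↦ mkPt m p.1 p.2 := by
  rintro ⟨x, y⟩ ⟨x', y'⟩ h
  simpa [mkPt, Fin.cons_inj] using h

theorem isBounded_preimage_mkPt {m : ℕ} {Ω : Set (EuclideanSpace ℝ (Fin (m + 1)))}
    (hΩ : Bornology.IsBounded Ω) :
    Bornology.IsBounded ((fun p : ℝ × EuclideanSpace ℝ (Fin m) ↦ mkPt m p.1 p.2) ⁻¹' Ω) := by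
  obtain ⟨_, -, hanti⟩ := ((isLinearMap_mkPt m).mk' _).exists_antilipschitzWith
    (LinearMap.ker_eq_bot.2 (mkPt_injective m))
  exact hanti.isBounded_preimage hΩ

/-- `∫_0^ε ω + ∫_{1-ε}^1 ω ≤ C ε ∫_ε^{1-ε} ω` for `0 < ε < 1/4`,
with `C` depending only on the dimension. -/
theorem omega_mass_at_ends
    (m : ℕ) (hm : 1 ≤ m) :
    ∃ C > (0:ℝ), ∀ (Ω : Set (EuclideanSpace ℝ (Fin (m+1)))),
      IsOpen Ω → Convex ℝ Ω → Bornology.IsBounded Ω →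
      -- Ω ⊆ (0,1) × ℝ^{n-1}
      (∀ x y, mkPt m x y ∈ Ω → x ∈ Ioo (0:ℝ) 1) →
      -- nonempty cross-sections
      (∀ s ∈ Ioo (0:ℝ) 1, (cross Ω s).Nonempty) →
      ∀ ε : ℝ, 0 < ε → ε < 1/4 →
        (∫ x in (0:ℝ)..ε, ωvol Ω x) + (∫ x in (1-ε)..1, ωvol Ω x)
          ≤ C * ε * ∫ x in ε..(1-ε), ωvol Ω x :=
  ⟨4 * 8 ^ Module.finrank ℝ (EuclideanSpace ℝ (Fin m)), by positivity,
    fun _ _ hc hb _ hne _ hε₀ hε ↦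
      omega_mass_at_ends_general volume (hc.is_linear_preimage (isLinearMap_mkPt m))
        (isBounded_preimage_mkPt hb) hne hε₀.le hε.le⟩
end
end

section
/- Let Ω and ω be as in the context, assume ω is differentiable on (0,1), fix a point (0, y₀) in the closure of Ω with first coordinate 0, let T_x : ℝ^{n−1} → ℝ^{n−1} be the affine map T_x(y) = y₀ + (ε/x)(y − y₀) for x ∈ (0,1), let Ω_ε(x) = T_x(Ω(x)), and let ω_ε(x) = (ε/x)^{n−1} ω(x) (which equals the (n−1)-dimensional measure of Ω_ε(x)). Then: (a) for ε ≤ x₁ ≤ x₂ ≤ 1−ε, Ω_ε(x₂) is contained in the closure of Ω_ε(x₁); (b) for all x ∈ [ε, 1−ε]: −2(n−1) ω_ε(x)/min(x, 1−x) ≤ ω_ε'(x) ≤ 0. -/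
open MeasureTheory Set Filter Topology RealInnerProductSpace

noncomputable section

/-!
If `(t, c)` lies in the closure of the open convex set `Ω`, then `Ω` contains every segment from
`(t, c)` to a point of `Ω`, apart possibly from `(t, c)` itself. Hence the homothety of centre `c`
and ratio `r ∈ (0, 1]` maps `Ω(s)` into `Ω(t + r(s - t))`. For `t = 0` this is the monotonicity of
the rescaled cross-sections. Taking volumes, `r^m ω(s) ≤ ω(t + r(s - t))` with equality at `r = 1`,
and differentiating there gives `(s - t) ω'(s) ≤ m ω(s)`. The case `t = 0` is the upper bound on
`ω_ε'`, and `t → 1` gives the lower one; the Brunn–Minkowski inequality never enters.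
-/

lemma measureReal_image_homothety {E : Type*} [NormedAddCommGroup E] [NormedSpace ℝ E]
    [FiniteDimensional ℝ E] [MeasurableSpace E] [BorelSpace E] (μ : Measure E)
    [μ.IsAddHaarMeasure] (c : E) (r : ℝ) (s : Set E) :
    μ.real (AffineMap.homothety c r '' s) = |r| ^ Module.finrank ℝ E * μ.real s := by
  rw [measureReal_def, Measure.addHaar_image_homothety, ENNReal.toReal_mul,
    ENNReal.toReal_ofReal (abs_nonneg _), abs_pow, measureReal_def]

section Calculus

variable {f : ℝ → ℝ} {s t x ε : ℝ} {m : ℕ}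

lemma sub_mul_deriv_le_of_pow_mul_le (hf : DifferentiableAt ℝ f s)
    (h : ∀ r ∈ Ioo (0 : ℝ) 1, r ^ m * f s ≤ f (AffineMap.lineMap t s r)) :
    (s - t) * deriv f s ≤ m * f s := by
  let F : ℝ → ℝ := fun r => f (AffineMap.lineMap t s r) - r ^ m * f s
  have hF : HasDerivAt F (deriv f s * (s - t) - m * f s) 1 := by
    have hline : HasDerivAt (AffineMap.lineMap t s : ℝ → ℝ) (s - t) 1 :=
      AffineMap.hasDerivAt_lineMap
    have hcomp : HasDerivAt (f ∘ AffineMap.lineMap (k := ℝ) t s) (deriv f s * (s - t)) 1 :=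
      HasDerivAt.comp 1 (by simpa using hf.hasDerivAt) hline
    exact (hcomp.fun_sub ((hasDerivAt_pow m (1 : ℝ)).mul_const (f s))).congr_deriv (by simp)
  have hmin : IsLocalMinOn F (Ioo 0 1) 1 := by
    filter_upwards [self_mem_nhdsWithin] with r hr
    simpa [F] using h r hr
  have hdir : (0 : ℝ) - 1 ∈ posTangentConeAt (Ioo (0 : ℝ) 1) 1 :=
    sub_mem_posTangentConeAt_of_openSegment_subset (by
      rw [openSegment_symm, openSegment_eq_Ioo zero_lt_one])
  have hdir_nonneg : 0 ≤ -(deriv f s * (s - t) - m * f s) := by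
    simpa using hmin.hasFDerivWithinAt_nonneg hF.hasFDerivAt.hasFDerivWithinAt hdir
  linarith

lemma hasDerivAt_div_pow_mul (ε : ℝ) (m : ℕ) {f' : ℝ} (hx : x ≠ 0) (hf : HasDerivAt f f' x) :
    HasDerivAt (fun s => (ε / s) ^ m * f s) ((ε / x) ^ m * (f' - m * f x / x)) x := by
  have hdiv : HasDerivAt (fun s : ℝ => ε / s) (-(ε / x) / x) x := by
    simpa [div_eq_mul_inv, pow_two, mul_assoc] using (hasDerivAt_inv hx).const_mul ε
  refine ((hdiv.fun_pow m).fun_mul hf).congr_deriv ?_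
  rcases m with _ | k
  · simp
  · simp only [Nat.add_sub_cancel, pow_succ]
    ring

lemma deriv_div_pow_mul_mem_Icc (hε : 0 ≤ ε) (hx : x ∈ Ioo (0 : ℝ) 1)
    (hf : DifferentiableAt ℝ f x) (hzero : x * deriv f x ≤ m * f x)
    (hone : (x - 1) * deriv f x ≤ m * f x) :
    deriv (fun s => (ε / s) ^ m * f s) x ∈
      Icc (-(2 * m) * ((ε / x) ^ m * f x) / min x (1 - x)) 0 := by
  obtain ⟨hx0, hx1⟩ := hx
  have hx1' : 0 < 1 - x := sub_pos.2 hx1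
  have hpow : 0 ≤ (ε / x) ^ m := pow_nonneg (div_nonneg hε hx0.le) m
  have hmf : 0 ≤ m * f x := by
    linarith [mul_le_mul_of_nonneg_left hzero hx1'.le, mul_le_mul_of_nonneg_left hone hx0.le]
  have hupper : deriv f x ≤ m * f x / x := by rwa [le_div_iff₀' hx0]
  have hlower : -(m * f x / (1 - x)) ≤ deriv f x := by
    rw [neg_le, le_div_iff₀' hx1']
    linarith
  rw [(hasDerivAt_div_pow_mul ε m hx0.ne' hf.hasDerivAt).deriv]
  refine ⟨?_, mul_nonpos_of_nonneg_of_nonpos hpow (sub_nonpos.2 hupper)⟩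
  calc -(2 * m) * ((ε / x) ^ m * f x) / min x (1 - x)
      = (ε / x) ^ m * (-(m * f x / min x (1 - x)) - m * f x / min x (1 - x)) := by ring
    _ ≤ (ε / x) ^ m * (-(m * f x / (1 - x)) - m * f x / x) := by
      gcongr
      · exact min_le_right x (1 - x)
      · exact min_le_left x (1 - x)
    _ ≤ (ε / x) ^ m * (deriv f x - m * f x / x) := by gcongr

end Calculus

section CrossSections

variable {m : ℕ} {Ω : Set (EuclideanSpace ℝ (Fin (m + 1)))}

lemma mkPt_lineMap (x x' : ℝ) (y y' : EuclideanSpace ℝ (Fin m)) (r : ℝ) :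
    mkPt m (AffineMap.lineMap x x' r) (AffineMap.lineMap y y' r) =
      AffineMap.lineMap (mkPt m x y) (mkPt m x' y') r := by
  ext i
  refine Fin.cases ?_ (fun j => ?_) i <;> simp [mkPt, AffineMap.lineMap_apply]

lemma norm_le_norm_mkPt (x : ℝ) (y : EuclideanSpace ℝ (Fin m)) : ‖y‖ ≤ ‖mkPt m x y‖ := by
  rw [EuclideanSpace.norm_eq, EuclideanSpace.norm_eq, Fin.sum_univ_succ]
  refine Real.sqrt_le_sqrt ?_
  simpa [mkPt] using sq_nonneg x

lemma isBounded_cross (hb : Bornology.IsBounded Ω) (s : ℝ) : Bornology.IsBounded (cross Ω s) := by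
  obtain ⟨C, hC⟩ := hb.exists_norm_le
  exact isBounded_iff_forall_norm_le.2 ⟨C, fun y hy => (norm_le_norm_mkPt s y).trans (hC _ hy)⟩

lemma image_homothety_cross_subset (ho : IsOpen Ω) (hc : Convex ℝ Ω) {t : ℝ}
    {c : EuclideanSpace ℝ (Fin m)} (htc : mkPt m t c ∈ closure Ω) (s : ℝ) {r : ℝ}
    (hr : r ∈ Ioc (0 : ℝ) 1) :
    AffineMap.homothety c r '' cross Ω s ⊆ cross Ω (AffineMap.lineMap t s r) := by
  rintro _ ⟨y, hy, rfl⟩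
  have hy_int : mkPt m s y ∈ interior Ω := by rwa [ho.interior_eq]
  have hcombo := hc.combo_closure_interior_mem_interior htc hy_int (sub_nonneg.2 hr.2) hr.1
    (sub_add_cancel 1 r)
  rw [ho.interior_eq, ← AffineMap.lineMap_apply_module, ← mkPt_lineMap] at hcombo
  rwa [AffineMap.homothety_eq_lineMap]

lemma antitoneOn_image_homothety_cross (ho : IsOpen Ω) (hc : Convex ℝ Ω)
    {y₀ : EuclideanSpace ℝ (Fin m)} (hy₀ : mkPt m 0 y₀ ∈ closure Ω) (ε : ℝ) :
    AntitoneOn (fun x => AffineMap.homothety y₀ (ε / x) '' cross Ω x) (Ioi 0) := by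
  intro x₁ (hx₁ : 0 < x₁) x₂ (hx₂ : 0 < x₂) hle
  have hratio : ε / x₂ = ε / x₁ * (x₁ / x₂) := (div_mul_div_cancel₀ hx₁.ne').symm
  have hsub := image_homothety_cross_subset ho hc hy₀ x₂
    ⟨div_pos hx₁ hx₂, (div_le_one hx₂).2 hle⟩
  have hheight : AffineMap.lineMap 0 x₂ (x₁ / x₂) = x₁ := by
    simp [AffineMap.lineMap_apply, hx₂.ne']
  rw [hheight] at hsub
  calc AffineMap.homothety y₀ (ε / x₂) '' cross Ω x₂
      = AffineMap.homothety y₀ (ε / x₁) '' (AffineMap.homothety y₀ (x₁ / x₂) '' cross Ω x₂) := by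
        rw [hratio, AffineMap.homothety_mul, AffineMap.coe_comp, image_comp]
    _ ⊆ AffineMap.homothety y₀ (ε / x₁) '' cross Ω x₁ := image_mono hsub

lemma pow_mul_ωvol_le (ho : IsOpen Ω) (hc : Convex ℝ Ω) {t : ℝ} {c : EuclideanSpace ℝ (Fin m)}
    (htc : mkPt m t c ∈ closure Ω) {s r : ℝ} (hr : r ∈ Ioc (0 : ℝ) 1)
    (hfin : volume (cross Ω (AffineMap.lineMap t s r)) ≠ ⊤) :
    r ^ m * ωvol Ω s ≤ ωvol Ω (AffineMap.lineMap t s r) := by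
  calc r ^ m * ωvol Ω s = volume.real (AffineMap.homothety c r '' cross Ω s) := by
        rw [measureReal_image_homothety, finrank_euclideanSpace_fin, abs_of_pos hr.1]
        rfl
    _ ≤ ωvol Ω (AffineMap.lineMap t s r) :=
        measureReal_mono (image_homothety_cross_subset ho hc htc s hr) hfin

lemma sub_mul_deriv_ωvol_le (ho : IsOpen Ω) (hc : Convex ℝ Ω) {t s : ℝ}
    {c : EuclideanSpace ℝ (Fin m)} (htc : mkPt m t c ∈ closure Ω)
    (hfin : ∀ x ∈ openSegment ℝ t s, volume (cross Ω x) ≠ ⊤)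
    (hd : DifferentiableAt ℝ (ωvol Ω) s) :
    (s - t) * deriv (ωvol Ω) s ≤ m * ωvol Ω s :=
  sub_mul_deriv_le_of_pow_mul_le hd fun _ hr =>
    pow_mul_ωvol_le ho hc htc (Ioo_subset_Ioc_self hr)
      (hfin _ (lineMap_mem_openSegment ℝ t s hr))

lemma sub_one_mul_deriv_ωvol_le (ho : IsOpen Ω) (hc : Convex ℝ Ω)
    (hne : ∀ s ∈ Ioo (0 : ℝ) 1, (cross Ω s).Nonempty)
    (hfin : ∀ s ∈ Ioo (0 : ℝ) 1, volume (cross Ω s) ≠ ⊤) {x : ℝ} (hx : x ∈ Ioo (0 : ℝ) 1)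
    (hd : DifferentiableAt ℝ (ωvol Ω) x) :
    (x - 1) * deriv (ωvol Ω) x ≤ m * ωvol Ω x := by
  let S : Set ℝ := {t | (x - t) * deriv (ωvol Ω) x ≤ m * ωvol Ω x}
  have hclosed : IsClosed S := isClosed_le (by fun_prop) continuous_const
  have hsub : Ioo 0 1 ⊆ S := fun t ht => by
    obtain ⟨c, hcm⟩ := hne t ht
    exact sub_mul_deriv_ωvol_le ho hc (subset_closure hcm)
      (fun s hs => hfin s ((convex_Ioo 0 1).openSegment_subset ht hx hs)) hd
  exact closure_minimal hsub hclosed (by simp [closure_Ioo])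

end CrossSections

theorem rescaled_cross_sections_monotone_general {m : ℕ}
    {Ω : Set (EuclideanSpace ℝ (Fin (m + 1)))} (ho : IsOpen Ω) (hc : Convex ℝ Ω)
    {ε : ℝ} (hε : 0 ≤ ε) {y₀ : EuclideanSpace ℝ (Fin m)} (hy₀ : mkPt m 0 y₀ ∈ closure Ω)
    (hne : ∀ s ∈ Ioo (0 : ℝ) 1, (cross Ω s).Nonempty)
    (hfin : ∀ s ∈ Ioo (0 : ℝ) 1, volume (cross Ω s) ≠ ⊤)
    {T : ℝ → EuclideanSpace ℝ (Fin m) → EuclideanSpace ℝ (Fin m)}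
    {Ωε : ℝ → Set (EuclideanSpace ℝ (Fin m))} {ωε : ℝ → ℝ}
    (hT : ∀ x y, T x y = y₀ + (ε / x) • (y - y₀)) (hΩ : ∀ x, Ωε x = T x '' cross Ω x)
    (hω : ∀ x, ωε x = (ε / x) ^ m * ωvol Ω x) :
    (∀ x ∈ Ioo (0 : ℝ) 1, ωε x = (volume (Ωε x)).toReal) ∧
      AntitoneOn Ωε (Ioi 0) ∧
      ∀ x ∈ Ioo (0 : ℝ) 1, DifferentiableAt ℝ (ωvol Ω) x →
        -(2 * m) * ωε x / min x (1 - x) ≤ deriv ωε x ∧ deriv ωε x ≤ 0 := by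
  have hT' : ∀ x, T x = AffineMap.homothety y₀ (ε / x) := fun x => funext fun y => by
    simp [hT, AffineMap.homothety_apply, add_comm]
  simp only [hT'] at hΩ
  obtain rfl := funext hΩ
  obtain rfl := funext hω
  refine ⟨fun x hx => ?_, antitoneOn_image_homothety_cross ho hc hy₀ ε, fun x hx hd => ?_⟩
  · rw [← measureReal_def, measureReal_image_homothety, finrank_euclideanSpace_fin,
      abs_of_nonneg (div_nonneg hε hx.1.le)]
    rfl
  · refine deriv_div_pow_mul_mem_Icc hε hx hd ?_ (sub_one_mul_deriv_ωvol_le ho hc hne hfin hx hd)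
    have hfin₀ : ∀ s ∈ openSegment ℝ 0 x, volume (cross Ω s) ≠ ⊤ := fun s hs => by
      rw [openSegment_eq_Ioo hx.1] at hs
      exact hfin s ⟨hs.1, hs.2.trans hx.2⟩
    simpa only [sub_zero] using sub_mul_deriv_ωvol_le ho hc hy₀ hfin₀ hd

/-- Properties of the rescaled cross-sections `Ω_ε(x) = T_x(Ω(x))`,
`T_x(y) = y₀ + (ε/x)(y - y₀)`: they are decreasing in `x` (up to closure), the rescaled
volume `ω_ε(x) = (ε/x)^{n-1} ω(x)` equals the measure of `Ω_ε(x)`, is nonincreasing, and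
satisfies `-2(n-1) ω_ε(x)/min(x,1-x) ≤ ω_ε'(x) ≤ 0` on `[ε, 1-ε]`. -/
theorem rescaled_cross_sections_monotone
    (m : ℕ) (hm : 1 ≤ m) (Ω : Set (EuclideanSpace ℝ (Fin (m+1))))
    (ε : ℝ) (hε : 0 < ε) (hε' : ε < 1/2)
    (y₀ : EuclideanSpace ℝ (Fin m)) (hy₀ : mkPt m 0 y₀ ∈ closure Ω) :
      IsOpen Ω → Convex ℝ Ω → Bornology.IsBounded Ω →
      -- Ω ⊆ (0,1) × ℝ^{n-1}
      (∀ x y, mkPt m x y ∈ Ω → x ∈ Ioo (0:ℝ) 1) →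
      -- nonempty cross-sections
      (∀ s ∈ Ioo (0:ℝ) 1, (cross Ω s).Nonempty) →
      -- ω differentiable on (0,1)
      (∀ x ∈ Ioo (0:ℝ) 1, DifferentiableAt ℝ (ωvol Ω) x) →
      -- T, Ωε and ωε, defined by their formulas
      ∀ (T : ℝ → EuclideanSpace ℝ (Fin m) → EuclideanSpace ℝ (Fin m))
        (Ωε : ℝ → Set (EuclideanSpace ℝ (Fin m))) (ωε : ℝ → ℝ),
      (∀ x y, T x y = y₀ + (ε / x) • (y - y₀)) →
      (∀ x, Ωε x = T x '' cross Ω x) →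
      (∀ x, ωε x = (ε / x) ^ m * ωvol Ω x) →
      -- (ωε agrees with the measure of Ωε)
      (∀ x ∈ Ioo (0:ℝ) 1, ωε x = (volume (Ωε x)).toReal) ∧
      -- (a) Ωε is decreasing in x
      (∀ x₁ x₂ : ℝ, ε ≤ x₁ → x₁ ≤ x₂ → x₂ ≤ 1 - ε → Ωε x₂ ⊆ closure (Ωε x₁)) ∧
      -- (b) bounds on ωε'
      (∀ x ∈ Icc ε (1 - ε),
        -(2 * m) * ωε x / min x (1 - x) ≤ deriv ωε x ∧ deriv ωε x ≤ 0) := by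
  intro ho hc hb _ hne hd T Ωε ωε hT hΩ hω
  obtain ⟨hvol, hanti, hderiv⟩ := rescaled_cross_sections_monotone_general ho hc hε.le hy₀ hne
    (fun s _ => (isBounded_cross hb s).measure_lt_top.ne) hT hΩ hω
  have hIcc : Icc ε (1 - ε) ⊆ Ioo 0 1 := Icc_subset_Ioo hε (sub_lt_self 1 hε)
  exact ⟨hvol, fun x₁ x₂ h₁ h₁₂ _ =>
      (hanti (hε.trans_le h₁) (hε.trans_le (h₁.trans h₁₂)) h₁₂).trans subset_closure,
    fun x hx => hderiv x (hIcc hx) (hd x (hIcc hx))⟩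
end
end
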